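/- arXiv:2301.01376 — 5 statements merged into one kernel-verified Lean document; each statement's English description precedes it below -/
import Mathlib

section
/- If (1, b, b+1) is an abc triple (with b a positive integer), then (1, b^k, b^k + 1) is an abc triple for each positive odd integer k. -/
open scoped Classical

/-- The radical of a natural number: the product of its distinct prime factors. -/
def rad (n : ℕ) : ℕ := ∏ p ∈ n.primeFactors, p

/-- The cosocle of a natural number: `n / rad n`. -/
def cosocle (n : ℕ) : ℕ := n / rad n

/-- `(a, b, c)` is an abc triple: `a, b, c` are relatively prime positive integers with
`a + b = c` and `rad (a*b*c) < c`. -/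
def IsABCTriple (a b c : ℕ) : Prop :=
  0 < a ∧ 0 < b ∧ 0 < c ∧ a + b = c ∧
    Nat.Coprime a b ∧ Nat.Coprime a c ∧ Nat.Coprime b c ∧ rad (a * b * c) < c

theorem rad_mul_le_aux (x y : ℕ) (hx : x ≠ 0) (hy : y ≠ 0) : rad (x * y) ≤ rad x * y := by
  have h1 : rad (x * y) ≤ rad x * rad y := by
    unfold rad
    rw [Nat.primeFactors_mul hx hy, ← Finset.prod_union_inter]
    refine Nat.le_mul_of_pos_right _ (Finset.prod_pos ?_)
    intro p hp
    exact (Nat.prime_of_mem_primeFactors (Finset.mem_inter.1 hp).1).pos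
  have h2 : rad y ≤ y := Nat.le_of_dvd (Nat.pos_of_ne_zero hy) (Nat.prod_primeFactors_dvd y)
  exact h1.trans (Nat.mul_le_mul_left _ h2)

theorem stmt_5 (b : ℕ) (hb : 0 < b) (h : IsABCTriple 1 b (b + 1)) :
    ∀ k : ℕ, 0 < k → Odd k → IsABCTriple 1 (b ^ k) (b ^ k + 1) := by
  intro k hk hodd
  obtain ⟨-, -, -, -, -, -, -, hr⟩ := h
  obtain ⟨m, hm⟩ : b + 1 ∣ b ^ k + 1 := by
    simpa using hodd.nat_add_dvd_pow_add_pow b 1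
  have hm0 : m ≠ 0 := by
    rintro rfl
    simp at hm
  refine ⟨one_pos, pow_pos hb k, Nat.succ_pos _, add_comm _ _, by simp, by simp, by simp, ?_⟩
  have e : rad (1 * b ^ k * (b ^ k + 1)) = rad (1 * b * (b + 1) * m) := by
    unfold rad
    rw [one_mul, one_mul, hm, mul_assoc, Nat.primeFactors_mul (pow_pos hb k).ne' (by positivity),
      Nat.primeFactors_mul hb.ne' (by positivity), Nat.primeFactors_pow _ hk.ne']
  rw [e]
  calc _ ≤ rad (1 * b * (b + 1)) * m := rad_mul_le_aux _ _ (by positivity) hm0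
    _ < (b + 1) * m := Nat.mul_lt_mul_of_pos_right hr (Nat.pos_of_ne_zero hm0)
    _ = _ := hm.symm
end

section
/- Let c and k be positive integers with c > 1. For each prime p with ord_p(c) dividing k, write w_p = v_p(k), and f_p = v_2(c^2 - 1) - 1 if p = 2, c ≡ 3 (mod 4), and k is even, and f_p = v_p(c^{ord_p(c)} - 1) otherwise. Then (1, c^k - 1, c^k) is an abc triple if and only if at least one of the following holds: (i) there exists a prime p > rad(c) such that ord_p(c) divides k and either f_p ≥ 2 or w_p ≥ 1; (ii) there exists a prime p < rad(c) such that ord_p(c) divides k and f_p + w_p - 1 ≥ m_p, where m_p is the least positive integer with p^{m_p} > rad(c); (iii) for each prime p such that ord_p(c) divides k there exists a non-negative integer a_p ≤ f_p + w_p - 1 such that ∏_{ord_p(c) | k} p^{a_p} > rad(c). -/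
open scoped Classical

/-- The exponent `f_p` from the paper. -/
noncomputable def fp (c k p : ℕ) : ℕ :=
  if p = 2 ∧ c % 4 = 3 ∧ Even k then padicValNat 2 (c ^ 2 - 1) - 1
  else padicValNat p (c ^ orderOf (c : ZMod p) - 1)

/-- The exponent `w_p = v_p(k)` from the paper. -/
def wp (k p : ℕ) : ℕ := padicValNat p k

/-- The set of primes `p` for which `ord_p(c)` divides `k`; all such primes divide
`c^k - 1`, hence are smaller than `c^k`. -/
noncomputable def ordSet (c k : ℕ) : Finset ℕ :=
  (Finset.range (c ^ k)).filter (fun p => p.Prime ∧ orderOf (c : ZMod p) ∣ k)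

lemma aux_dvd (c k p : ℕ) (hc : 1 < c) (hp : p.Prime) :
    orderOf (c : ZMod p) ∣ k ↔ p ∣ c ^ k - 1 := by
  have h1 : 1 ≤ c ^ k := Nat.one_le_pow _ _ (by omega)
  rw [orderOf_dvd_iff_pow_eq_one, ← CharP.cast_eq_zero_iff (ZMod p) p, Nat.cast_sub h1]
  push_cast
  exact sub_eq_zero.symm

lemma aux_notdvd (c k p : ℕ) (hc : 1 < c) (hk : 0 < k) (hp : p.Prime) (h : p ∣ c ^ k - 1) :
    ¬ p ∣ c := by
  intro hd
  have h1 : 1 ≤ c ^ k := Nat.one_le_pow _ _ (by omega)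
  have h2 : p ∣ c ^ k := dvd_pow hd hk.ne'
  have := (Nat.dvd_sub h2 h)
  rw [Nat.sub_sub_self h1] at this
  exact hp.one_lt.ne' (Nat.dvd_one.mp this)

lemma aux_pos (c k : ℕ) (hc : 1 < c) (hk : 0 < k) : 0 < c ^ k - 1 := by
  have := Nat.one_lt_pow hk.ne' hc
  omega

lemma aux_ndvd (c k p : ℕ) (hc : 1 < c) (hk : 0 < k) (hp : p.Prime) (hd : p ∣ c - 1)
    (hpk : ¬ p ∣ k) : padicValNat p (c ^ k - 1) = padicValNat p (c - 1) := by
  have := Fact.mk hp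
  have hnd : ¬ p ∣ c := aux_notdvd c 1 p hc one_pos hp (by simpa using hd)
  have h1 : 1 ≤ c ^ k := Nat.one_le_pow _ _ (by omega)
  have e : emultiplicity (p : ℤ) ((c : ℤ) ^ k - 1 ^ k) = emultiplicity (p : ℤ) ((c : ℤ) - 1) := by
    apply emultiplicity_pow_sub_pow_of_prime (Nat.prime_iff_prime_int.mp hp)
    · have : ((c : ℤ) - 1) = ((c - 1 : ℕ) : ℤ) := by push_cast [Nat.cast_sub hc.le]; ring
      rw [this]; exact_mod_cast hd
    · exact_mod_cast hnd
    · exact_mod_cast hpk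
  have e1 : ((c : ℤ) - 1) = ((c - 1 : ℕ) : ℤ) := by push_cast [Nat.cast_sub hc.le]; ring
  have e2 : ((c : ℤ) ^ k - 1 ^ k) = ((c ^ k - 1 : ℕ) : ℤ) := by push_cast [Nat.cast_sub h1]; simp
  rw [e1, e2, Int.natCast_emultiplicity, Int.natCast_emultiplicity,
    ← padicValNat_eq_emultiplicity (aux_pos c k hc hk).ne',
    ← padicValNat_eq_emultiplicity (by omega)] at e
  exact_mod_cast e

lemma aux_two (c : ℕ) (h : c % 4 = 1) : padicValNat 2 (c + 1) = 1 := by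
  obtain ⟨m, hm⟩ : ∃ m, c + 1 = 2 * m := ⟨(c + 1) / 2, by omega⟩
  rw [hm, padicValNat.mul (by norm_num) (by omega), padicValNat.self (by norm_num),
    padicValNat.eq_zero_of_not_dvd (by omega)]

lemma aux_val (c k p : ℕ) (hc : 1 < c) (hk : 0 < k) (hp : p.Prime)
    (h : orderOf (c : ZMod p) ∣ k) : padicValNat p (c ^ k - 1) = fp c k p + wp k p := by
  have := Fact.mk hp
  have hdk := (aux_dvd c k p hc hp).mp h
  have hnd := aux_notdvd c k p hc hk hp hdk
  rcases hp.eq_two_or_odd' with rfl | hodd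
  · have hd1 : 2 ∣ c - 1 := by omega
    have ho : orderOf (c : ZMod 2) = 1 := by
      have := (aux_dvd c 1 2 hc hp).mpr (by simpa using hd1)
      exact Nat.dvd_one.mp this
    unfold fp wp
    rw [ho, pow_one]
    by_cases hev : Even k
    · have L := padicValNat.pow_two_sub_pow (x := c) (y := 1) hc hd1 hnd hk.ne' hev
      rw [one_pow] at L
      by_cases h4 : c % 4 = 3
      · rw [if_pos ⟨rfl, h4, hev⟩]
        have e : c ^ 2 - 1 = (c + 1) * (c - 1) := by
          simpa using Nat.sq_sub_sq c 1
        have hge : 1 ≤ padicValNat 2 (c - 1) := one_le_padicValNat_of_dvd (by omega) hd1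
        rw [e, padicValNat.mul (by omega) (by omega)]
        omega
      · rw [if_neg (by tauto)]
        have := aux_two c (by omega)
        omega
    · rw [if_neg (by tauto)]
      have hk2 : ¬ 2 ∣ k := fun h => hev (even_iff_two_dvd.mpr h)
      rw [aux_ndvd c k 2 hc hk hp hd1 hk2, padicValNat.eq_zero_of_not_dvd hk2, add_zero]
  · have hp2 : p ≠ 2 := by rintro rfl; exact absurd hodd (by decide)
    unfold fp wp
    rw [if_neg (by tauto)]
    set d := orderOf (c : ZMod p) with hdd
    have hd0 : 0 < d := Nat.pos_of_dvd_of_pos h hk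
    have hpd : p ∣ c ^ d - 1 := (aux_dvd c d p hc hp).mp dvd_rfl
    have hcd : 1 < c ^ d := Nat.one_lt_pow hd0.ne' hc
    obtain ⟨m, rfl⟩ := h
    have hm : m ≠ 0 := by rintro rfl; simp at hk
    have L := padicValNat.pow_sub_pow (p := p) (x := c ^ d) (y := 1) hodd hcd hpd
      (fun h => hnd (hp.dvd_of_dvd_pow h)) hm
    rw [one_pow, ← pow_mul] at L
    have hc0 : (c : ZMod p) ≠ 0 := by
      rw [Ne, CharP.cast_eq_zero_iff (ZMod p) p]; exact hnd
    have hdp : d ∣ p - 1 := orderOf_dvd_of_pow_eq_one (ZMod.pow_card_sub_one_eq_one hc0)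
    have hpnd : ¬ p ∣ d := fun hh => by
      have := Nat.le_of_dvd (by have := hp.two_le; omega) (hh.trans hdp)
      have := hp.two_le
      omega
    rw [L, padicValNat.mul hd0.ne' hm, padicValNat.eq_zero_of_not_dvd hpnd, zero_add]

lemma aux_ordSet (c k : ℕ) (hc : 1 < c) (hk : 0 < k) :
    ordSet c k = (c ^ k - 1).primeFactors := by
  ext p
  have h0 := aux_pos c k hc hk
  simp only [ordSet, Finset.mem_filter, Finset.mem_range, Nat.mem_primeFactors]
  constructor
  · rintro ⟨_, hp, h⟩
    exact ⟨hp, (aux_dvd c k p hc hp).mp h, h0.ne'⟩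
  · rintro ⟨hp, h, _⟩
    refine ⟨?_, hp, (aux_dvd c k p hc hp).mpr h⟩
    have := Nat.le_of_dvd h0 h
    omega

lemma aux_prod (N : ℕ) (hN : 0 < N) :
    (∏ p ∈ N.primeFactors, p ^ (padicValNat p N - 1)) * rad N = N := by
  unfold rad
  rw [← Finset.prod_mul_distrib]
  conv_rhs => rw [← Nat.prod_factorization_pow_eq_self hN.ne']
  rw [Finsupp.prod, Nat.support_factorization]
  refine Finset.prod_congr rfl fun p hp => ?_
  have hp' := Nat.mem_primeFactors.mp hp
  have := Fact.mk hp'.1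
  have hge : 1 ≤ padicValNat p N := one_le_padicValNat_of_dvd hN.ne' hp'.2.1
  rw [Nat.factorization_def _ hp'.1, ← pow_succ, Nat.sub_add_cancel hge]

lemma aux_rad_pos (n : ℕ) : 0 < rad n :=
  Finset.prod_pos fun p hp => (Nat.prime_of_mem_primeFactors hp).pos

lemma aux_main (c k : ℕ) (hc : 1 < c) (hk : 0 < k) :
    IsABCTriple 1 (c ^ k - 1) (c ^ k) ↔
      rad c < ∏ p ∈ ordSet c k, p ^ (fp c k p + wp k p - 1) := by
  have hN := aux_pos c k hc hk
  have hP : ∏ p ∈ ordSet c k, p ^ (fp c k p + wp k p - 1) =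
      ∏ p ∈ (c ^ k - 1).primeFactors, p ^ (padicValNat p (c ^ k - 1) - 1) := by
    rw [aux_ordSet c k hc hk]
    refine Finset.prod_congr rfl fun p hp => ?_
    have hp' := Nat.mem_primeFactors.mp hp
    rw [aux_val c k p hc hk hp'.1 ((aux_dvd c k p hc hp'.1).mpr hp'.2.1)]
  rw [hP]
  have hcop : Nat.Coprime (c ^ k - 1) (c ^ k) := by
    have h := Nat.coprime_self_add_right (m := c ^ k - 1) (n := 1)
    rw [Nat.sub_add_cancel (by omega)] at h
    exact h.mpr (Nat.coprime_one_right _)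
  have hprod := aux_prod _ hN
  set N := c ^ k - 1 with hNdef
  have hNe : c ^ k = N + 1 := by omega
  set P := ∏ p ∈ N.primeFactors, p ^ (padicValNat p N - 1) with hPdef
  have hrad : rad (1 * N * c ^ k) = rad N * rad c := by
    unfold rad
    rw [one_mul, hcop.primeFactors_mul, Nat.primeFactors_pow _ hk.ne',
      Finset.prod_union]
    have := hcop.disjoint_primeFactors
    rwa [Nat.primeFactors_pow _ hk.ne'] at this
  have hR := aux_rad_pos N
  have hne : P ≠ rad c := by
    intro he
    obtain ⟨q, hq, hqc⟩ := Nat.exists_prime_and_dvd hc.ne'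
    have h1 : q ∣ rad c := Finset.dvd_prod_of_mem _ (Nat.mem_primeFactors.mpr ⟨hq, hqc, by omega⟩)
    have h2 : q ∣ N := by
      rw [← hprod]; exact (he ▸ h1 : q ∣ P).mul_right _
    exact aux_notdvd c k q hc hk hq h2 hqc
  constructor
  · rintro ⟨-, -, -, -, -, -, -, h⟩
    rw [hrad, hNe, Nat.lt_succ_iff, mul_comm] at h
    conv_rhs at h => rw [← hprod]
    have := Nat.le_of_mul_le_mul_right h hR
    omega
  · intro h
    refine ⟨one_pos, hN, by omega, by omega, Nat.coprime_one_left _, Nat.coprime_one_left _, hcop, ?_⟩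
    rw [hrad, hNe, Nat.lt_succ_iff, mul_comm]
    conv_rhs => rw [← hprod]
    exact Nat.mul_le_mul_right _ h.le

lemma aux_le (c k p : ℕ) (hc : 1 < c) (hk : 0 < k) (hp : p.Prime)
    (h : orderOf (c : ZMod p) ∣ k) :
    p ^ (fp c k p + wp k p - 1) ≤ ∏ p ∈ ordSet c k, p ^ (fp c k p + wp k p - 1) := by
  have hm : p ∈ ordSet c k := by
    rw [aux_ordSet c k hc hk, Nat.mem_primeFactors]
    exact ⟨hp, (aux_dvd c k p hc hp).mp h, (aux_pos c k hc hk).ne'⟩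
  refine Finset.single_le_prod' (f := fun p => p ^ (fp c k p + wp k p - 1)) (fun q hq => ?_) hm
  exact Nat.one_le_pow _ _ (Finset.mem_filter.mp hq).2.1.pos

lemma aux_fp (c k p : ℕ) (hc : 1 < c) (hk : 0 < k) (hp : p.Prime)
    (h : orderOf (c : ZMod p) ∣ k) : 1 ≤ fp c k p := by
  have := Fact.mk hp
  have hd0 : 0 < orderOf (c : ZMod p) := Nat.pos_of_dvd_of_pos h hk
  unfold fp
  split_ifs with hh
  · obtain ⟨rfl, h4, -⟩ := hh
    have : 2 ≤ padicValNat 2 (c ^ 2 - 1) := by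
      rw [← padicValNat_dvd_iff_le (aux_pos c 2 hc two_pos).ne']
      have e : c ^ 2 - 1 = (c + 1) * (c - 1) := by simpa using Nat.sq_sub_sq c 1
      rw [e]
      exact Dvd.dvd.mul_right (by omega) _
    omega
  · exact one_le_padicValNat_of_dvd (aux_pos c _ hc hd0).ne' ((aux_dvd c _ p hc hp).mp dvd_rfl)

theorem stmt_9 (c k : ℕ) (hc : 1 < c) (hk : 0 < k) :
    IsABCTriple 1 (c ^ k - 1) (c ^ k) ↔
      ((∃ p : ℕ, p.Prime ∧ rad c < p ∧ orderOf (c : ZMod p) ∣ k ∧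
          (2 ≤ fp c k p ∨ 1 ≤ wp k p)) ∨
       (∃ p : ℕ, p.Prime ∧ p < rad c ∧ orderOf (c : ZMod p) ∣ k ∧
          sInf {m : ℕ | 0 < m ∧ rad c < p ^ m} ≤ fp c k p + wp k p - 1) ∨
       (∃ a : ℕ → ℕ, (∀ p : ℕ, p.Prime → orderOf (c : ZMod p) ∣ k →
            a p ≤ fp c k p + wp k p - 1) ∧
          rad c < ∏ p ∈ ordSet c k, p ^ a p)) := by
  rw [aux_main c k hc hk]
  constructor
  · intro h
    exact Or.inr (Or.inr ⟨fun p => fp c k p + wp k p - 1, fun _ _ _ => le_rfl, h⟩)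
  · rintro (⟨p, hp, hr, ho, h⟩ | ⟨p, hp, hr, ho, h⟩ | ⟨a, ha, h⟩)
    · refine hr.trans_le (le_trans ?_ (aux_le c k p hc hk hp ho))
      have := aux_fp c k p hc hk hp ho
      exact Nat.le_self_pow (by omega) p
    · refine lt_of_lt_of_le ?_ (aux_le c k p hc hk hp ho)
      have hne : {m : ℕ | 0 < m ∧ rad c < p ^ m}.Nonempty :=
        ⟨rad c, aux_rad_pos c, Nat.lt_pow_self hp.one_lt⟩
      exact (Nat.sInf_mem hne).2.trans_le (Nat.pow_le_pow_right hp.pos h)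
    · refine h.trans_le (Finset.prod_le_prod' fun p hp => ?_)
      have hp' := (Finset.mem_filter.mp hp).2
      exact Nat.pow_le_pow_right hp'.1.pos (ha p hp'.1 hp'.2)
end

section
/- Let n > 1 be an odd integer, let φ denote the Euler totient function, let d = gcd(n - 1, φ(n)), and let m = 2^{v_2(4·φ(n)) - 2·v_2(d)} · d^2. If cosocle(m) > rad(n), then (1, n^{φ(n)·k} - 1, n^{φ(n)·k}) is an abc triple for each positive integer k. -/
open scoped Classical

lemma aux_rad_dvd (n : ℕ) : rad n ∣ n := Nat.prod_primeFactors_dvd n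

lemma aux_rad_mul_le (a b : ℕ) (ha : a ≠ 0) (hb : b ≠ 0) : rad (a * b) ≤ rad a * rad b := by
  unfold rad
  rw [Nat.primeFactors_mul ha hb, ← Finset.prod_union_inter]
  apply Nat.le_mul_of_pos_right
  exact Finset.prod_pos fun p hp =>
    (Nat.prime_of_mem_primeFactors (Finset.mem_inter.1 hp).1).pos

lemma aux_sq_dvd (a q e : ℕ) (h1 : (q : ℤ) ∣ a - 1) (h2 : q ∣ e) : (q : ℤ) ^ 2 ∣ (a : ℤ) ^ e - 1 := by
  rw [← geom_sum_mul, sq]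
  apply mul_dvd_mul _ h1
  have h3 : (q : ℤ) ∣ ∑ i ∈ Finset.range e, ((a : ℤ) ^ i - 1) :=
    Finset.dvd_sum fun i _ => h1.trans (sub_one_dvd_pow_sub_one _ i)
  have h4 : (q : ℤ) ∣ (e : ℤ) := by exact_mod_cast h2
  rw [Finset.sum_sub_distrib] at h3
  simp only [Finset.sum_const, Finset.card_range, nsmul_eq_mul, mul_one] at h3
  exact (dvd_iff_dvd_of_dvd_sub h3).2 h4

lemma aux_two_s11 (n : ℕ) (hodd : Odd n) (v : ℕ) : (2 : ℤ) ^ (v + 3) ∣ (n : ℤ) ^ (2 ^ (v + 1)) - 1 := by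
  induction v with
  | zero =>
    obtain ⟨j, rfl⟩ := hodd
    obtain ⟨t, ht⟩ := Int.even_mul_succ_self (j : ℤ)
    refine ⟨t, ?_⟩
    push_cast
    norm_num
    linear_combination 4 * ht
  | succ v ih =>
    have h : (n : ℤ) ^ (2 ^ (v + 1 + 1)) - 1
        = ((n : ℤ) ^ (2 ^ (v + 1)) - 1) * ((n : ℤ) ^ (2 ^ (v + 1)) + 1) := by
      rw [pow_succ 2 (v + 1), pow_mul]; ring
    rw [h, show v + 1 + 3 = (v + 3) + 1 by ring, pow_succ]
    apply mul_dvd_mul ih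
    have : Odd ((n : ℤ) ^ (2 ^ (v + 1))) := Odd.pow (by exact_mod_cast hodd)
    exact (this.add_odd odd_one).two_dvd

theorem stmt_11 (n : ℕ) (hn : 1 < n) (hodd : Odd n)
    (d : ℕ) (hd : d = Nat.gcd (n - 1) (Nat.totient n))
    (m : ℕ)
    (hm : m = 2 ^ padicValNat 2 (4 * Nat.totient n) * d ^ 2 / 2 ^ (2 * padicValNat 2 d))
    (hcos : rad n < cosocle m) :
    ∀ k : ℕ, 0 < k →
      IsABCTriple 1 (n ^ (Nat.totient n * k) - 1) (n ^ (Nat.totient n * k)) := by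
  intro k hk
  have hn2 : 2 < n := by
    rcases hodd with ⟨j, rfl⟩; omega
  have hφ : 0 < n.totient := Nat.totient_pos.2 (by omega)
  have hφ2 : 2 ∣ n.totient := (Nat.totient_even hn2).two_dvd
  have hd0 : d ≠ 0 := by rw [hd]; exact (Nat.gcd_pos_of_pos_right _ hφ).ne'
  haveI : Fact (Nat.Prime 2) := ⟨Nat.prime_two⟩
  obtain ⟨q, hq⟩ : 2 ^ padicValNat 2 d ∣ d := pow_padicValNat_dvd
  have hqodd : ¬ 2 ∣ q := by
    rintro ⟨r, hr⟩
    apply pow_succ_padicValNat_not_dvd (p := 2) hd0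
    refine ⟨r, ?_⟩
    rw [pow_succ, mul_assoc, ← hr]; exact hq
  have hm' : m = 2 ^ padicValNat 2 (4 * Nat.totient n) * q ^ 2 := by
    rw [hm]
    apply Nat.div_eq_of_eq_mul_left (by positivity)
    generalize padicValNat 2 d = a at hq
    subst hq
    ring
  have hqd : q ∣ d := ⟨_, by rw [mul_comm]; exact hq⟩
  have hval : padicValNat 2 (4 * n.totient) = padicValNat 2 n.totient + 2 := by
    rw [padicValNat.mul (by norm_num) hφ.ne', show 4 = 2 ^ 2 by norm_num, padicValNat.prime_pow]
    ring
  have hv1 : 1 ≤ padicValNat 2 n.totient := one_le_padicValNat_of_dvd hφ.ne' hφ2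
  obtain ⟨v, hv⟩ : ∃ v, padicValNat 2 n.totient = v + 1 := ⟨_, (Nat.sub_add_cancel hv1).symm⟩
  have h2φ : 2 ^ (v + 1) ∣ n.totient := hv ▸ pow_padicValNat_dvd
  have h1n : 1 ≤ n ^ (n.totient * k) := Nat.one_le_pow _ _ (by omega)
  have cast : ((n ^ (n.totient * k) - 1 : ℕ) : ℤ) = (n : ℤ) ^ (n.totient * k) - 1 := by
    push_cast [h1n]; rfl
  have hA : 2 ^ (v + 3) ∣ n ^ (n.totient * k) - 1 := by
    obtain ⟨s, hs⟩ := h2φ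
    zify
    rw [cast, hs, mul_assoc, pow_mul]
    exact (aux_two_s11 n hodd v).trans (sub_one_dvd_pow_sub_one _ _)
  have hB : q ^ 2 ∣ n ^ (n.totient * k) - 1 := by
    zify
    rw [cast]
    apply aux_sq_dvd
    · have : q ∣ n - 1 := hqd.trans (hd ▸ Nat.gcd_dvd_left _ _)
      zify [hn.le] at this
      exact this
    · exact Dvd.dvd.mul_right (hqd.trans (hd ▸ Nat.gcd_dvd_right _ _)) _
  have hmN : m ∣ n ^ (n.totient * k) - 1 := by
    rw [hm', hval, hv]
    apply Nat.Coprime.mul_dvd_of_dvd_of_dvd _ hA hB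
    exact Nat.Coprime.pow _ _ ((Nat.Prime.coprime_iff_not_dvd Nat.prime_two).2 hqodd)
  have hc : 1 < n ^ (n.totient * k) := Nat.one_lt_pow (by positivity) hn
  have hcop : Nat.Coprime (n ^ (n.totient * k) - 1) (n ^ (n.totient * k)) := by
    rw [Nat.coprime_comm]
    exact (Nat.coprime_self_sub_right h1n).2 (Nat.coprime_one_right _)
  have hradc : rad (n ^ (n.totient * k)) = rad n := by
    unfold rad
    rw [Nat.primeFactors_pow _ (by positivity)]
  refine ⟨one_pos, by omega, by omega, by omega, Nat.coprime_one_left _, Nat.coprime_one_left _,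
    hcop, ?_⟩
  rw [one_mul]
  generalize n ^ (n.totient * k) = c at *
  obtain ⟨t, ht⟩ := hmN
  have hN0 : c - 1 ≠ 0 := by omega
  have hm0 : m ≠ 0 := by rintro rfl; simp at ht; omega
  have ht0 : t ≠ 0 := by rintro rfl; simp at ht; omega
  have hmc : rad m * cosocle m = m := Nat.mul_div_cancel' (aux_rad_dvd m)
  calc rad ((c - 1) * c) ≤ rad (c - 1) * rad c := aux_rad_mul_le _ _ hN0 (by omega)
    _ = rad (c - 1) * rad n := by rw [hradc]
    _ ≤ rad (c - 1) * cosocle m := Nat.mul_le_mul_left _ hcos.le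
    _ ≤ (rad m * t) * cosocle m := by
        apply Nat.mul_le_mul_right
        rw [ht]
        exact (aux_rad_mul_le _ _ hm0 ht0).trans
          (Nat.mul_le_mul_left _ (Nat.le_of_dvd (Nat.pos_of_ne_zero ht0) (aux_rad_dvd t)))
    _ = c - 1 := by rw [ht, mul_right_comm, hmc]
    _ < c := by omega
end

section
/- Let n > 1 be an integer and let p be an odd prime with p > rad(n). Then for each positive integer k, (1, n^{p(p-1)k} - 1, n^{p(p-1)k}) is an abc triple. -/
open scoped Classical

theorem rad_eq_radical (n : ℕ) : rad n = UniqueFactorizationMonoid.radical n := by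
  rw [Nat.radical_eq_prod_primeFactors, rad]

theorem rad_mul_le (a b : ℕ) : rad (a * b) ≤ rad a * rad b := by
  simp only [rad_eq_radical]
  exact Nat.le_of_dvd (Nat.mul_pos (Nat.radical_pos _) (Nat.radical_pos _))
    UniqueFactorizationMonoid.radical_mul_dvd

theorem stmt_14 (n p : ℕ) (hn : 1 < n) (hp : p.Prime) (hodd : Odd p) (hrad : rad n < p) :
    ∀ k : ℕ, 0 < k →
      IsABCTriple 1 (n ^ (p * (p - 1) * k) - 1) (n ^ (p * (p - 1) * k)) := by
  intro k hk
  have hp2 := hp.two_le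
  have hpn : ¬ p ∣ n := by
    intro h
    have h1 : p ∣ rad n :=
      Finset.dvd_prod_of_mem (fun q : ℕ => q) (Nat.mem_primeFactors.2 ⟨hp, h, by omega⟩)
    have h2 : 0 < rad n := by rw [rad_eq_radical]; exact Nat.radical_pos _
    exact absurd (Nat.le_of_dvd h2 h1) (by omega)
  have hE : p * (p - 1) * k ≠ 0 :=
    Nat.mul_ne_zero (Nat.mul_ne_zero (by omega) (by omega)) (by omega)
  have hc : 1 < n ^ (p * (p - 1) * k) := Nat.one_lt_pow hE hn
  have hcop : Nat.Coprime n (p ^ 2) :=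
    Nat.Coprime.pow_right 2 ((Nat.Prime.coprime_iff_not_dvd hp).2 hpn).symm
  have hdvd : p ^ 2 ∣ n ^ (p * (p - 1) * k) - 1 := by
    have h1 := Nat.ModEq.pow_totient hcop
    rw [Nat.totient_prime_pow hp (by norm_num)] at h1
    have h2 := h1.pow k
    rw [← pow_mul, one_pow] at h2
    simp only [Nat.add_one_sub_one, pow_one] at h2
    exact (Nat.modEq_iff_dvd' hc.le).1 h2.symm
  have hradc : rad (n ^ (p * (p - 1) * k)) = rad n := by
    simp only [rad_eq_radical]
    exact UniqueFactorizationMonoid.radical_pow n hE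
  generalize n ^ (p * (p - 1) * k) = c at *
  refine ⟨one_pos, by omega, by omega, by omega, Nat.coprime_one_left _,
    Nat.coprime_one_left _, ?_, ?_⟩
  · have := (Nat.coprime_self_add_right (m := c - 1) (n := 1)).2 (Nat.coprime_one_right _)
    rwa [Nat.sub_add_cancel hc.le] at this
  · rw [one_mul]
    obtain ⟨m, hm⟩ := hdvd
    have hm0 : 0 < m := by
      rcases Nat.eq_zero_or_pos m with h | h
      · subst h; simp at hm; omega
      · exact h
    have h1 := rad_mul_le (c - 1) c
    have h2 := rad_mul_le (p ^ 2) m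
    have h3 : rad (p ^ 2) = p := by
      rw [rad, Nat.primeFactors_prime_pow (by norm_num) hp, Finset.prod_singleton]
    have h4 : rad m ≤ m := by
      rw [rad_eq_radical]; exact Nat.radical_le_self_iff.2 (by omega)
    rw [← hm, h3] at h2
    have h5 : rad (c - 1) ≤ p * m := h2.trans (Nat.mul_le_mul_left _ h4)
    calc rad ((c - 1) * c) ≤ rad (c - 1) * rad n := by rw [← hradc]; exact h1
      _ ≤ (p * m) * rad n := Nat.mul_le_mul_right _ h5
      _ ≤ (p * m) * p := Nat.mul_le_mul_left _ hrad.le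
      _ = c - 1 := by rw [hm]; ring
      _ < c := by omega
end

section
/- Let n ≥ 3 and j ≥ 1 be integers, and let k be a positive integer such that n·k is even. Then (1, (n^j - 1)^{nk} - 1, (n^j - 1)^{nk}) is an abc triple. (In particular, for n = 2 replaced by the special case: for each integer j ≥ 2 and each positive integer k, (1, (2^j - 1)^{2k} - 1, (2^j - 1)^{2k}) is an abc triple.) -/
open scoped Classical

theorem aux_dvd_s18 (n j k : ℕ) (hj : 1 ≤ j) (hn : 1 ≤ n) (he : Even (n * k)) :
    n ^ (j + 1) ∣ (n ^ j - 1) ^ (n * k) - 1 := by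
  have hx : 1 ≤ n ^ j := Nat.one_le_pow _ _ hn
  by_cases hm0 : n ^ j - 1 = 0
  · have : n = 1 := by
      by_contra h
      have := Nat.one_lt_pow (n := j) (by omega) (show 1 < n by omega)
      omega
    subst this
    simp
  have hm : 1 ≤ (n ^ j - 1) ^ (n * k) := Nat.one_le_pow _ _ (by omega)
  rw [← Int.natCast_dvd_natCast]
  push_cast [Nat.cast_sub hm, Nat.cast_sub hx]
  have h1 : (n : ℤ) ^ j ∣ ((n : ℤ) ^ j - 1) - (-1) := by simp
  have h2 : (n : ℤ) ∣ ((n : ℤ) ^ j - 1) - (-1) := (dvd_pow_self _ (by omega)).trans h1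
  have h3 := dvd_geom_sum₂_self h2
  have h4 := mul_dvd_mul h3 h1
  rw [Commute.geom_sum₂_mul (Commute.all _ _), ← pow_succ'] at h4
  have h5 := h4.trans (sub_dvd_pow_sub_pow _ _ k)
  rwa [← pow_mul, ← pow_mul, he.neg_one_pow] at h5

theorem aux_main_s18 (n j k : ℕ) (hn : 2 ≤ n) (hj : 1 ≤ j) (hk : 0 < k) (hx : 3 ≤ n ^ j)
    (he : Even (n * k)) :
    IsABCTriple 1 ((n ^ j - 1) ^ (n * k) - 1) ((n ^ j - 1) ^ (n * k)) := by
  obtain ⟨t, ht⟩ := aux_dvd_s18 n j k hj (by omega) he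
  have hnk : n * k ≠ 0 := by positivity
  have hc : 1 < (n ^ j - 1) ^ (n * k) := Nat.one_lt_pow hnk (by omega)
  set c := (n ^ j - 1) ^ (n * k) with hcdef
  set m := n ^ j - 1 with hm
  have hmx : n ^ j = m + 1 := by omega
  have ht0 : 0 < t := by
    rcases Nat.eq_zero_or_pos t with h | h
    · subst h; omega
    · exact h
  refine ⟨one_pos, by omega, by omega, by omega, by simp, by simp, ?_, ?_⟩
  · have : Nat.Coprime (c - 1) (c - 1 + 1) := by simp
    rwa [Nat.sub_add_cancel hc.le] at this
  · have hne : n * t * m ≠ 0 := by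
      have : 0 < m := by omega
      positivity
    have hsub : (1 * (c - 1) * c).primeFactors ⊆ (n * t * m).primeFactors := by
      intro p hp
      have hpp := Nat.prime_of_mem_primeFactors hp
      have hd := Nat.dvd_of_mem_primeFactors hp
      refine Nat.mem_primeFactors.2 ⟨hpp, ?_, hne⟩
      rw [one_mul] at hd
      rcases hpp.dvd_mul.1 hd with h | h
      · rw [ht] at h
        rcases hpp.dvd_mul.1 h with h | h
        · exact ((hpp.dvd_of_dvd_pow h).mul_right t).mul_right m
        · exact (h.mul_left n).mul_right m
      · exact (hpp.dvd_of_dvd_pow h).mul_left _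
    have h1 : rad (1 * (c - 1) * c) ≤ n * t * m := by
      unfold rad
      exact Nat.le_of_dvd (Nat.pos_of_ne_zero hne)
        ((Finset.prod_dvd_prod_of_subset _ _ _ hsub).trans (Nat.prod_primeFactors_dvd _))
    have h2 : c - 1 = n * t * m + n * t := by
      rw [ht, pow_succ, hmx]; ring
    omega

theorem stmt_18 (n j : ℕ) (hn : 3 ≤ n) (hj : 1 ≤ j) (k : ℕ) (hk : 0 < k)
    (heven : Even (n * k)) :
    IsABCTriple 1 ((n ^ j - 1) ^ (n * k) - 1) ((n ^ j - 1) ^ (n * k)) ∧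
    (∀ j' k' : ℕ, 2 ≤ j' → 0 < k' →
      IsABCTriple 1 ((2 ^ j' - 1) ^ (2 * k') - 1) ((2 ^ j' - 1) ^ (2 * k'))) := by
  refine ⟨aux_main_s18 n j k (by omega) hj hk ?_ heven, fun j' k' hj' hk' =>
    aux_main_s18 2 j' k' le_rfl (by omega) hk' ?_ (even_two_mul k')⟩
  · exact hn.trans (Nat.le_self_pow (by omega) n)
  · have : 2 ^ 2 ≤ 2 ^ j' := Nat.pow_le_pow_right (by norm_num) hj'
    omega
end
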